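/- arXiv:1603.08393 — 6 statements merged into one kernel-verified Lean document; each statement's English description precedes it below -/
import Mathlib

section
/- There exists a constant C > 0 such that for all integers n and k with 3 ≤ k ≤ √n and every n-vertex radio network, the Oblivious k-Shot schedule, executed under the k-shot semantics, informs every vertex of the network within C·n²/k steps. -/
/-- Vertex `v`, first informed at step `T`, transmits at step `t` under the
`k`-shot semantics with schedule `𝒯`: we need `t > T`, `v ∈ 𝒯 t`, and `t` must be
among the first `k` steps after `T` at which `v` appears in a transmission set,
i.e. fewer than `k` steps `t'` with `T < t' < t` satisfy `v ∈ 𝒯 t'`. -/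
def transmitsAt {n : ℕ} (𝒯 : ℕ → Finset (Fin n)) (k : ℕ)
    (T t : ℕ) (v : Fin n) : Prop :=
  T < t ∧ v ∈ 𝒯 t ∧ ((Finset.Ioo T t).filter (fun t' => v ∈ 𝒯 t')).card < k

open Classical in
/-- `runState 𝒯 k adj s t v = some T` iff vertex `v` has been informed by the end of
step `t`, and was first informed at step `T`.  The source `s` is informed at step `0`;
an uninformed vertex `w` becomes informed at step `t+1` iff exactly one in-neighbor
of `w` transmits at step `t+1`. -/
noncomputable def runState {n : ℕ} (𝒯 : ℕ → Finset (Fin n)) (k : ℕ)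
    (adj : Fin n → Fin n → Prop) (s : Fin n) : ℕ → Fin n → Option ℕ
  | 0 => fun v => if v = s then some 0 else none
  | t + 1 => fun w =>
      match runState 𝒯 k adj s t w with
      | some T => some T
      | none =>
          if ∃! v : Fin n, adj v w ∧
              ∃ T, runState 𝒯 k adj s t v = some T ∧ transmitsAt 𝒯 k T (t + 1) v
          then some (t + 1) else none

/-- `adj` together with source `s` forms an `n`-vertex radio network:
every vertex is reachable from the source by a directed path. -/
def IsNetwork {n : ℕ} (adj : Fin n → Fin n → Prop) (s : Fin n) : Prop :=
  ∀ v : Fin n, Relation.ReflTransGen adj s v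

/-- The schedule `𝒯` completes broadcasting on the network `(adj, s)`. -/
def Completes {n : ℕ} (𝒯 : ℕ → Finset (Fin n)) (k : ℕ)
    (adj : Fin n → Fin n → Prop) (s : Fin n) : Prop :=
  ∀ v : Fin n, ∃ t : ℕ, (runState 𝒯 k adj s t v).isSome

/-- `𝒯` is a correct `k`-shot broadcasting schedule for `n`: it completes
broadcasting on every `n`-vertex radio network. -/
def CorrectSchedule (n k : ℕ) (𝒯 : ℕ → Finset (Fin n)) : Prop :=
  ∀ (adj : Fin n → Fin n → Prop) (s : Fin n), IsNetwork adj s → Completes 𝒯 k adj s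
/-- The ceiling of the square root of a natural number: the least `m` with `n ≤ m²`. -/
def ceilSqrt (n : ℕ) : ℕ :=
  if Nat.sqrt n * Nat.sqrt n = n then Nat.sqrt n else Nat.sqrt n + 1

/-- The smallest prime `p` with `p ≥ m`. -/
def smallestPrimeGE (m : ℕ) : ℕ := Nat.find (Nat.exists_infinite_primes m)

/-- `p` for the Oblivious k-Shot schedule: the smallest prime `≥ ⌈√n⌉`. -/
def obP (n : ℕ) : ℕ := smallestPrimeGE (ceilSqrt n)

/-- `K = ⌈p/(k−2)⌉` for the Oblivious k-Shot schedule (`k ≥ 3`). -/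
def obK (n k : ℕ) : ℕ := (obP n + (k - 3)) / (k - 2)

/-- The point of the plane `(ZMod p) × (ZMod p)` associated with label `i`. -/
def pointOf (p : ℕ) (i : ℕ) : ZMod p × ZMod p := ((i / p : ℕ), (i % p : ℕ))

/-- Membership in the line `L_{a,b}` of direction `a ∈ {0,…,p}` and offset `b ∈ ZMod p`:
`L_{p,b} = {(x,y) : x = b}` and `L_{a,b} = {(x,y) : y = a·x + b}` for `a < p`. -/
def lineMem (p a : ℕ) (b : ZMod p) (q : ZMod p × ZMod p) : Prop :=
  if a = p then q.1 = b else q.2 = (a : ZMod p) * q.1 + b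

open Classical in
/-- The Oblivious k-Shot schedule on labels `{0,…,n−1}`.  Steps `t = 1, 2, …` come
in consecutive blocks of `K+1` steps.  The first step of the `r`-th block
(`r = 0, 1, …`) is the `r`-th Line-Transmit step, with transmission set
`{i < n : point(i) ∈ L_{a,b}}` where `b = r mod p` and `a = ⌊r/p⌋ mod (p+1)`.
The remaining `K` steps of each block are Round-Robin steps; the `j`-th
Round-Robin step overall has transmission set `{j mod p²} ∩ {0,…,n−1}`. -/
noncomputable def obSched (n k : ℕ) : ℕ → Finset (Fin n) := fun t =>
  let p := obP n
  let K := obK n k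
  if t = 0 then ∅
  else
    let t' := t - 1
    let r := t' / (K + 1)
    let pos := t' % (K + 1)
    if pos = 0 then
      Finset.univ.filter
        (fun i : Fin n => lineMem p ((r / p) % (p + 1)) ((r % p : ℕ) : ZMod p) (pointOf p (i : ℕ)))
    else
      Finset.univ.filter (fun i : Fin n => (i : ℕ) = (r * K + (pos - 1)) % (p ^ 2))


lemma lineMem_exists (p a : ℕ) [NeZero p] (q : ZMod p × ZMod p) :
    ∃ b : ℕ, b < p ∧ lineMem p a (b : ZMod p) q := by
  by_cases h : a = p
  · exact ⟨q.1.val, ZMod.val_lt _, by simp [lineMem, h]⟩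
  · refine ⟨(q.2 - (a : ZMod p) * q.1).val, ZMod.val_lt _, ?_⟩
    simp [lineMem, h]

lemma lineMem_unique (p a b c : ℕ) (hb : b < p) (hc : c < p) (q : ZMod p × ZMod p)
    (h1 : lineMem p a (b : ZMod p) q) (h2 : lineMem p a (c : ZMod p) q) : b = c := by
  have h : (b : ZMod p) = (c : ZMod p) := by
    unfold lineMem at h1 h2
    split_ifs at h1 h2 with h
    · exact h1.symm.trans h2
    · exact add_left_cancel (h1.symm.trans h2)
  rw [ZMod.natCast_eq_natCast_iff] at h
  exact Nat.ModEq.eq_of_lt_of_lt h hb hc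

lemma lineMem_two (p : ℕ) [Fact p.Prime] (a a' : ℕ) (ha : a ≤ p) (ha' : a' ≤ p) (hne : a ≠ a')
    (b b' : ZMod p) (q q' : ZMod p × ZMod p)
    (h1 : lineMem p a b q) (h2 : lineMem p a b q')
    (h3 : lineMem p a' b' q) (h4 : lineMem p a' b' q') : q = q' := by
  unfold lineMem at *
  obtain ⟨x, y⟩ := q
  obtain ⟨x', y'⟩ := q'
  simp only at *
  split_ifs at h1 h2 h3 h4 with e1 e2 e2
  · omega
  · subst h2; subst h1; rw [h3, h4]
  · subst h4; subst h3; rw [h1, h2]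
  · have hx : ((a : ZMod p) - a') * (x - x') = 0 := by
      linear_combination h3 - h1 + h2 - h4
    rcases mul_eq_zero.1 hx with h | h
    · exfalso
      have h := sub_eq_zero.1 h
      rw [ZMod.natCast_eq_natCast_iff] at h
      exact hne (Nat.ModEq.eq_of_lt_of_lt h (by omega) (by omega))
    · have h := sub_eq_zero.1 h
      subst h
      rw [h1, h2]

lemma pointOf_inj (p i j : ℕ) (hi : i < p ^ 2) (hj : j < p ^ 2)
    (h : pointOf p i = pointOf p j) : i = j := by
  have hp : 0 < p := by
    rcases Nat.eq_zero_or_pos p with h | h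
    · subst h; simp at hi
    · exact h
  unfold pointOf at h
  rw [Prod.mk.injEq, ZMod.natCast_eq_natCast_iff, ZMod.natCast_eq_natCast_iff] at h
  have h1 := Nat.ModEq.eq_of_lt_of_lt h.1 (Nat.div_lt_of_lt_mul (by rw [← sq]; exact hi))
    (Nat.div_lt_of_lt_mul (by rw [← sq]; exact hj))
  have h2 := Nat.ModEq.eq_of_lt_of_lt h.2 (Nat.mod_lt _ hp) (Nat.mod_lt _ hp)
  rw [← Nat.div_add_mod i p, ← Nat.div_add_mod j p, h1, h2]

lemma obP_prime (n : ℕ) : (obP n).Prime := (Nat.find_spec (Nat.exists_infinite_primes _)).2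

lemma obP_ge (n : ℕ) : ceilSqrt n ≤ obP n := (Nat.find_spec (Nat.exists_infinite_primes _)).1

lemma le_ceilSqrt (n : ℕ) : n ≤ ceilSqrt n ^ 2 := by
  unfold ceilSqrt
  split_ifs with h
  · rw [sq]; exact h.ge
  · have := Nat.lt_succ_sqrt n
    rw [sq]; exact this.le

lemma le_obP_sq (n : ℕ) : n ≤ obP n ^ 2 :=
  (le_ceilSqrt n).trans (Nat.pow_le_pow_left (obP_ge n) 2)

lemma obP_le (n : ℕ) (hn : 1 ≤ n) : obP n ^ 2 ≤ 16 * n := by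
  have hs : 1 ≤ Nat.sqrt n := Nat.le_sqrt.2 (by omega)
  have hc : ceilSqrt n ≤ Nat.sqrt n + 1 := by unfold ceilSqrt; split_ifs <;> omega
  have hc1 : ceilSqrt n ≠ 0 := by unfold ceilSqrt; split_ifs <;> omega
  obtain ⟨q, hq, h1, h2⟩ := Nat.exists_prime_lt_and_le_two_mul _ hc1
  have h3 : obP n ≤ q := Nat.find_min' (Nat.exists_infinite_primes _) ⟨h1.le, hq⟩
  have h4 : obP n ≤ 4 * Nat.sqrt n := by omega
  calc obP n ^ 2 ≤ (4 * Nat.sqrt n) ^ 2 := Nat.pow_le_pow_left h4 2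
    _ = 16 * (Nat.sqrt n ^ 2) := by ring
    _ ≤ 16 * n := Nat.mul_le_mul_left _ (Nat.sqrt_le' n)

lemma obK_mul (n k : ℕ) (hk : 3 ≤ k) : obP n ≤ obK n k * (k - 2) := by
  unfold obK
  have := Nat.div_add_mod (obP n + (k - 3)) (k - 2)
  have h2 := Nat.mod_lt (obP n + (k - 3)) (show 0 < k - 2 by omega)
  rw [mul_comm]
  omega

lemma obK_mul_le (n k : ℕ) (hk : 3 ≤ k) : obK n k * (k - 2) ≤ obP n + (k - 3) :=
  Nat.div_mul_le_self _ _

lemma k_le_obP (n k : ℕ) (hkn : k ^ 2 ≤ n) : k ≤ obP n :=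
  (Nat.pow_le_pow_iff_left (two_ne_zero)).1 (hkn.trans (le_obP_sq n))

lemma obK_pos (n k : ℕ) (hk : 3 ≤ k) : 0 < obK n k := by
  have h1 := obK_mul n k hk
  have h2 := (obP_prime n).pos
  rcases Nat.eq_zero_or_pos (obK n k) with h | h
  · rw [h, zero_mul] at h1
    omega
  · exact h

/-- The phase length. -/
def phLen (n k : ℕ) : ℕ := (obK n k + 1) * obP n

lemma phLen_pos (n k : ℕ) : 0 < phLen n k := Nat.mul_pos (Nat.succ_pos _) (obP_prime n).pos

lemma phLen_bound (n k : ℕ) (hk : 3 ≤ k) (hkn : k ^ 2 ≤ n) : phLen n k * k ≤ 80 * n := by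
  have hn : 1 ≤ n := by nlinarith
  have h1 := obK_mul_le n k hk
  have h2 := k_le_obP n k hkn
  have h3 := obP_le n hn
  have h4 : (obK n k + 1) * k ≤ 5 * obP n := by
    obtain ⟨j, rfl⟩ : ∃ j, k = j + 3 := ⟨k - 3, by omega⟩
    have e1 : j + 3 - 2 = j + 1 := by omega
    have e2 : j + 3 - 3 = j := by omega
    rw [e1, e2] at h1
    have hK : obK n (j+3) ≤ obP n := by
      have : obK n (j+3) * (j+1) ≤ obP n * (j + 1) := by
        have := (obP_prime n).pos
        nlinarith
      exact Nat.le_of_mul_le_mul_right this (by omega)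
    nlinarith
  unfold phLen
  calc (obK n k + 1) * obP n * k = ((obK n k + 1) * k) * obP n := by ring
    _ ≤ 5 * obP n * obP n := Nat.mul_le_mul_right _ h4
    _ = 5 * obP n ^ 2 := by ring
    _ ≤ 80 * n := by omega

/-- Line steps. -/
lemma mem_sched_line (n k r : ℕ) (v : Fin n) :
    v ∈ obSched n k (r * (obK n k + 1) + 1) ↔
      lineMem (obP n) ((r / obP n) % (obP n + 1)) ((r % obP n : ℕ) : ZMod (obP n))
        (pointOf (obP n) v) := by
  unfold obSched
  simp

/-- Round-Robin steps. -/
lemma mem_sched_rr (n k r c : ℕ) (hc : c < obK n k) (v : Fin n) :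
    v ∈ obSched n k (r * (obK n k + 1) + c + 2) ↔
      (v : ℕ) = (r * obK n k + c) % (obP n ^ 2) := by
  have e : r * (obK n k + 1) + c + 2 - 1 = (c + 1) + (obK n k + 1) * r := by
    rw [mul_comm]; omega
  have e1 : (r * (obK n k + 1) + c + 2 - 1) / (obK n k + 1) = r := by
    rw [e, Nat.add_mul_div_left _ _ (Nat.succ_pos _), Nat.div_eq_of_lt (by omega)]; omega
  have e2 : (r * (obK n k + 1) + c + 2 - 1) % (obK n k + 1) = c + 1 := by
    rw [e, Nat.add_mul_mod_self_left, Nat.mod_eq_of_lt (by omega)]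
  unfold obSched
  simp only [e1, e2]
  simp

/-- `t` is a Round-Robin step of `v`. -/
def IsRR (n k : ℕ) (v : Fin n) (t : ℕ) : Prop :=
  ∃ r c, c < obK n k ∧ t = r * (obK n k + 1) + c + 2 ∧ v ∈ obSched n k t

lemma IsRR.unique {n k : ℕ} {v : Fin n} {t : ℕ} (h : IsRR n k v t) (u : Fin n)
    (hu : u ∈ obSched n k t) : u = v := by
  obtain ⟨r, c, hc, rfl, hv⟩ := h
  rw [mem_sched_rr _ _ _ _ hc] at hu hv
  exact Fin.ext (hu.trans hv.symm)

lemma step_cases (n k t : ℕ) (ht : 0 < t) :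
    (∃ r, t = r * (obK n k + 1) + 1) ∨
      ∃ r c, c < obK n k ∧ t = r * (obK n k + 1) + c + 2 := by
  have h1 := Nat.div_add_mod (t - 1) (obK n k + 1)
  have h2 : (t - 1) % (obK n k + 1) < obK n k + 1 := Nat.mod_lt _ (Nat.succ_pos (obK n k))
  rw [mul_comm] at h1
  rcases Nat.eq_zero_or_pos ((t - 1) % (obK n k + 1)) with h | h
  · left
    exact ⟨(t - 1) / (obK n k + 1), by omega⟩
  · right
    exact ⟨(t - 1) / (obK n k + 1), (t - 1) % (obK n k + 1) - 1, by omega, by omega⟩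

/-- A congruent number in any window. -/
lemma exists_mod_window (m v j : ℕ) (hv : v < m) : ∃ i, j ≤ i ∧ i < j + m ∧ i % m = v := by
  refine ⟨j + (v + (m - j % m)) % m, by omega, ?_, ?_⟩
  · have := Nat.mod_lt (v + (m - j % m)) (show 0 < m by omega)
    omega
  · have h1 := Nat.mod_lt j (show 0 < m by omega)
    rw [Nat.add_mod, Nat.mod_mod, ← Nat.add_mod]
    have h2 := Nat.div_add_mod j m
    have : j + (v + (m - j % m)) = v + m * (j / m + 1) := by
      rw [mul_add]; omega
    rw [this, Nat.add_mul_mod_self_left, Nat.mod_eq_of_lt hv]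

lemma exists_RR (n k : ℕ) (hk : 3 ≤ k) (v : Fin n) (T : ℕ) :
    ∃ t, T < t ∧ t ≤ T + (k - 2) * phLen n k ∧ IsRR n k v t := by
  have hK := obK_pos n k hk
  have hM : obP n ^ 2 ≤ obK n k * ((k - 2) * obP n) := by
    have := Nat.mul_le_mul_right (obP n) (obK_mul n k hk)
    rw [sq]; rw [← mul_assoc]; exact this
  have hlen : (k - 2) * phLen n k
      = ((k - 2) * obP n) * obK n k + (k - 2) * obP n := by
    unfold phLen; ring
  rw [hlen]
  rw [mul_comm] at hM
  generalize (k - 2) * obP n = M at *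
  have key : ∀ j, ∃ r c, c < obK n k ∧ j = r * obK n k + c := fun j =>
    ⟨j / obK n k, j % obK n k, Nat.mod_lt _ hK, by
      rw [mul_comm]; exact (Nat.div_add_mod _ _).symm⟩
  have hv : (v : ℕ) < obP n ^ 2 := v.2.trans_le (le_obP_sq n)
  have hT := Nat.div_add_mod T (obK n k + 1)
  have hT2 := Nat.mod_lt T (Nat.succ_pos (obK n k))
  set r0 := T / (obK n k + 1)
  set c0 := T % (obK n k + 1)
  obtain ⟨j, hj1, hj2, hj3⟩ := exists_mod_window (obP n ^ 2) v (r0 * obK n k + (c0 - 1)) hv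
  obtain ⟨r, c, hc, hj⟩ := key j
  have hmem : IsRR n k v (r * (obK n k + 1) + c + 2) :=
    ⟨r, c, hc, rfl, by rw [mem_sched_rr _ _ _ _ hc, ← hj, hj3]⟩
  refine ⟨_, ?_, ?_, hmem⟩
  · have hr : r0 ≤ r := by
      by_contra h
      have := Nat.mul_le_mul_right (obK n k) (show r + 1 ≤ r0 by omega)
      rw [add_mul, one_mul] at this
      omega
    rw [mul_comm] at hT
    rw [mul_add, mul_one] at hT ⊢
    omega
  · rw [mul_comm] at hT
    rw [mul_add, mul_one] at hT ⊢
    rcases Nat.eq_zero_or_pos c0 with h0 | h0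
    · have hr : r + 1 ≤ r0 + M := by
        by_contra h
        have := Nat.mul_le_mul_right (obK n k) (show r0 + M ≤ r by omega)
        rw [add_mul] at this
        omega
      omega
    · have hr : r ≤ r0 + M := by
        by_contra h
        have := Nat.mul_le_mul_right (obK n k) (show r0 + M + 1 ≤ r by omega)
        rw [add_mul, add_mul] at this
        omega
      omega

lemma phase_of_line (n k r : ℕ) : (r * (obK n k + 1) + 1 - 1) / phLen n k = r / obP n := by
  unfold phLen
  rw [Nat.add_sub_cancel, ← Nat.div_div_eq_div_mul, Nat.mul_div_cancel _ (Nat.succ_pos _)]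

/-- Before (and at) the first Round-Robin step, no vertex has exhausted its shots. -/
lemma transmits_of_le (n k : ℕ) (hk : 3 ≤ k) (v : Fin n) (T t : ℕ) (hT : T < t)
    (hle : t ≤ T + (k - 2) * phLen n k) (hv : v ∈ obSched n k t)
    (hno : ∀ t', T < t' → t' < t → ¬ IsRR n k v t') :
    transmitsAt (obSched n k) k T t v := by
  refine ⟨hT, hv, ?_⟩
  have hP := phLen_pos n k
  have hcard : ((Finset.Ioo T t).filter (fun t' => v ∈ obSched n k t')).card
      ≤ (Finset.Icc (T / phLen n k) (T / phLen n k + (k - 2))).card := by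
    apply Finset.card_le_card_of_injOn (fun t' => (t' - 1) / phLen n k)
    · intro t' ht'
      simp only [Finset.coe_filter, Finset.mem_Ioo, Set.mem_ofPred_eq] at ht'
      simp only [Finset.coe_Icc, Set.mem_Icc]
      constructor
      · exact Nat.div_le_div_right (by omega)
      · rw [← Nat.add_mul_div_right _ _ hP]
        exact Nat.div_le_div_right (by omega)
    · intro t1 h1 t2 h2 h12
      simp only [Finset.coe_filter, Finset.mem_Ioo, Set.mem_ofPred_eq] at h1 h2
      have hl : ∀ t', (T < t' ∧ t' < t) ∧ v ∈ obSched n k t' →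
          ∃ r, t' = r * (obK n k + 1) + 1 := by
        intro t' h
        rcases step_cases n k t' (by omega) with h' | ⟨r, c, hc, h'⟩
        · exact h'
        · exact absurd ⟨r, c, hc, h', h.2⟩ (hno t' h.1.1 h.1.2)
      obtain ⟨r1, e1⟩ := hl t1 h1
      obtain ⟨r2, e2⟩ := hl t2 h2
      subst e1; subst e2
      simp only [phase_of_line] at h12
      have m1 := (mem_sched_line n k r1 v).1 h1.2
      have m2 := (mem_sched_line n k r2 v).1 h2.2
      rw [h12] at m1
      have hb := lineMem_unique _ _ _ _ (Nat.mod_lt _ (obP_prime n).pos)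
        (Nat.mod_lt _ (obP_prime n).pos) _ m1 m2
      have : r1 = r2 := by
        rw [← Nat.div_add_mod r1 (obP n), ← Nat.div_add_mod r2 (obP n), h12, hb]
      rw [this]
  rw [Nat.card_Icc] at hcard
  omega

lemma exists_line_step (n k h : ℕ) (v : Fin n) :
    ∃ r, r / obP n = h ∧ v ∈ obSched n k (r * (obK n k + 1) + 1) := by
  have hp := (obP_prime n).pos
  haveI : NeZero (obP n) := ⟨hp.ne'⟩
  obtain ⟨b, hb, hm⟩ := lineMem_exists (obP n) (h % (obP n + 1)) (pointOf (obP n) v)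
  have e1 : (b + obP n * h) / obP n = h := by
    rw [Nat.add_mul_div_left _ _ hp, Nat.div_eq_of_lt hb, zero_add]
  have e2 : (b + obP n * h) % obP n = b := by
    rw [Nat.add_mul_mod_self_left, Nat.mod_eq_of_lt hb]
  refine ⟨b + obP n * h, e1, ?_⟩
  rw [mem_sched_line, e1, e2]
  exact hm

section run
variable {n k : ℕ} {𝒯 : ℕ → Finset (Fin n)} {adj : Fin n → Fin n → Prop} {s : Fin n}

lemma run_succ_some {t T : ℕ} {v : Fin n} (h : runState 𝒯 k adj s t v = some T) :
    runState 𝒯 k adj s (t + 1) v = some T := by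
  simp [runState, h]

lemma run_mono {t t' T : ℕ} {v : Fin n} (htt : t ≤ t') (h : runState 𝒯 k adj s t v = some T) :
    runState 𝒯 k adj s t' v = some T := by
  induction t', htt using Nat.le_induction with
  | base => exact h
  | succ m _ ih => exact run_succ_some ih

lemma run_none {t t' : ℕ} {v : Fin n} (htt : t ≤ t') (h : runState 𝒯 k adj s t' v = none) :
    runState 𝒯 k adj s t v = none := by
  cases e : runState 𝒯 k adj s t v with
  | none => rfl
  | some T => rw [run_mono htt e] at h; simp at h

lemma run_first {t T : ℕ} {v : Fin n} (h : runState 𝒯 k adj s t v = some T) :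
    T ≤ t ∧ runState 𝒯 k adj s T v = some T := by
  induction t with
  | zero =>
    have h' := h
    simp only [runState] at h'
    split_ifs at h' with hv
    simp at h'
    subst h'
    exact ⟨le_rfl, h⟩
  | succ t ih =>
    cases e : runState 𝒯 k adj s t v with
    | some T' =>
      have h2 := run_succ_some e
      rw [h] at h2
      simp at h2
      subst h2
      exact ⟨(ih e).1.trans (Nat.le_succ _), (ih e).2⟩
    | none =>
      have h' := h
      simp only [runState, e] at h'
      split_ifs at h' with hv
      simp at h'
      subst h'
      exact ⟨le_rfl, h⟩

/-- If `w` remains uninformed although in-neighbour `v` transmits at step `t`, then some other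
informed in-neighbour of `w` also is in the transmission set. -/
lemma run_collision {t T : ℕ} {v w : Fin n} (hv : runState 𝒯 k adj s T v = some T)
    (hvw : adj v w) (htr : transmitsAt 𝒯 k T t v) (hw : runState 𝒯 k adj s t w = none) :
    ∃ u, u ≠ v ∧ adj u w ∧ u ∈ 𝒯 t ∧ (runState 𝒯 k adj s t u).isSome := by
  obtain ⟨t, rfl⟩ : ∃ m, t = m + 1 := ⟨t - 1, by have := htr.1; omega⟩
  have hw0 := run_none (Nat.le_succ t) hw
  simp only [runState, hw0] at hw
  split_ifs at hw with hex
  have hTt := htr.1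
  by_contra hcon
  push Not at hcon
  apply hex
  refine ⟨v, ⟨hvw, T, run_mono (by omega) hv, htr⟩, ?_⟩
  rintro u ⟨huw, T', hu, hutr⟩
  by_contra hne
  exact hcon u hne huw hutr.2.1 (by rw [run_succ_some hu]; rfl)

end run

lemma layer_bound (n k : ℕ) (hk : 3 ≤ k) (hkn : k ^ 2 ≤ n) (adj : Fin n → Fin n → Prop)
    (s v w : Fin n) (T q : ℕ) (hv : runState (obSched n k) k adj s T v = some T)
    (hvw : adj v w)
    (hw : runState (obSched n k) k adj s (T + (q + 1) * phLen n k) w = none)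
    (A : Finset (Fin n))
    (hA : ∀ u, adj u w →
      (runState (obSched n k) k adj s (T + (q + 1) * phLen n k) u).isSome → u ∈ A) :
    q + 1 ≤ A.card := by
  classical
  have hP := phLen_pos n k
  have hex := exists_RR n k hk v T
  set tR := Nat.find hex with htR
  obtain ⟨hR1, hR2, hR3⟩ := Nat.find_spec hex
  rw [← htR] at hR1 hR2 hR3
  have hmin : ∀ t', T < t' → t' < tR → ¬ IsRR n k v t' := by
    intro t' h1 h2 h3
    exact Nat.find_min hex h2 ⟨h1, by omega, h3⟩
  have hRt := transmits_of_le n k hk v T tR hR1 hR2 hR3.choose_spec.choose_spec.2.2 hmin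
  have hlt : T + (q + 1) * phLen n k < tR := by
    by_contra hcon
    obtain ⟨u, hne, -, hu, -⟩ := run_collision hv hvw hRt (run_none (by omega) hw)
    exact hne (hR3.unique u hu)
  have hqk : q + 1 < k - 2 := by
    have : (q + 1) * phLen n k < (k - 2) * phLen n k := by omega
    exact Nat.lt_of_mul_lt_mul_right this
  have hkp := k_le_obP n k hkn
  have main : ∀ i : Fin q, ∃ u, u ∈ A.erase v ∧ ∃ r, r / obP n = T / phLen n k + 1 + i ∧
      v ∈ obSched n k (r * (obK n k + 1) + 1) ∧ u ∈ obSched n k (r * (obK n k + 1) + 1) := by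
    intro i
    obtain ⟨r, hr, hvr⟩ := exists_line_step n k (T / phLen n k + 1 + i) v
    have hph := phase_of_line n k r
    rw [hr, Nat.add_sub_cancel] at hph
    have hd := Nat.div_add_mod (r * (obK n k + 1)) (phLen n k)
    have hd2 := Nat.mod_lt (r * (obK n k + 1)) hP
    have hT1 := Nat.div_add_mod T (phLen n k)
    have hT2 := Nat.mod_lt T hP
    rw [hph] at hd
    have h1 : T < r * (obK n k + 1) + 1 := by
      have : phLen n k * (T / phLen n k + 1 + i)
        = phLen n k * (T / phLen n k) + phLen n k + phLen n k * i := by ring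
      rw [this] at hd
      omega
    have h2 : r * (obK n k + 1) + 1 ≤ T + (q + 1) * phLen n k := by
      have hi : phLen n k * ((i : ℕ) + 1) ≤ phLen n k * q := Nat.mul_le_mul_left _ i.2
      have e1 : phLen n k * (T / phLen n k + 1 + i)
        = phLen n k * (T / phLen n k) + phLen n k * ((i : ℕ) + 1) := by ring
      have e2 : (q + 1) * phLen n k = phLen n k * q + phLen n k := by ring
      rw [e1] at hd
      rw [e2]
      omega
    have htr := transmits_of_le n k hk v T _ h1 (by omega) hvr
      (fun t' a b => hmin t' a (by omega))
    obtain ⟨u, hne, huw, hu, hus⟩ := run_collision hv hvw htr (run_none h2 hw)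
    refine ⟨u, Finset.mem_erase.2 ⟨hne, hA u huw ?_⟩, r, hr, hvr, hu⟩
    obtain ⟨T', hT'⟩ := Option.isSome_iff_exists.1 hus
    rw [run_mono h2 hT']; rfl
  choose g hg r hr hvr hur using main
  haveI : Fact (obP n).Prime := ⟨obP_prime n⟩
  have hinj : Function.Injective g := by
    intro i j hij
    by_contra hne
    have hne' : (i : ℕ) ≠ j := fun h => hne (Fin.ext h)
    have a1 := (mem_sched_line _ _ _ _).1 (hvr i)
    have a2 := (mem_sched_line _ _ _ _).1 (hur i)
    have a3 := (mem_sched_line _ _ _ _).1 (hvr j)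
    have a4 := (mem_sched_line _ _ _ _).1 (hur j)
    rw [← hij] at a4
    have hdir : (r i / obP n) % (obP n + 1) ≠ (r j / obP n) % (obP n + 1) := by
      rw [hr, hr]
      intro h
      have h' : (i : ℕ) ≡ j [MOD (obP n + 1)] := Nat.ModEq.add_left_cancel' _ h
      exact hne' (Nat.ModEq.eq_of_lt_of_lt h' (by omega) (by omega))
    have := lineMem_two (obP n) _ _ (Nat.lt_succ_iff.1 (Nat.mod_lt _ (Nat.succ_pos _)))
      (Nat.lt_succ_iff.1 (Nat.mod_lt _ (Nat.succ_pos _))) hdir _ _ _ _ a1 a2 a3 a4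
    have := pointOf_inj _ _ _ (v.2.trans_le (le_obP_sq n)) ((g i).2.trans_le (le_obP_sq n)) this
    exact (Finset.mem_erase.1 (hg i)).1 (Fin.ext this.symm)
  have hcard : q ≤ (A.erase v).card := by
    have h := Finset.card_le_card_of_injOn (s := Finset.univ) (t := A.erase v) g
      (fun i _ => hg i) hinj.injOn
    simpa using h
  have hvA : v ∈ A := hA v hvw (by rw [run_mono (by omega) hv]; rfl)
  have := Finset.card_erase_add_one hvA
  omega

open Classical in
/-- Vertices from which `z` can be reached in at most `m` steps. -/
noncomputable def reachIn {n : ℕ} (adj : Fin n → Fin n → Prop) (z : Fin n) : ℕ → Finset (Fin n)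
  | 0 => {z}
  | m + 1 => Finset.univ.filter (fun v => v ∈ reachIn adj z m ∨ ∃ w ∈ reachIn adj z m, adj v w)

lemma mem_reachIn_succ {n : ℕ} (adj : Fin n → Fin n → Prop) (z : Fin n) (m : ℕ) (v : Fin n) :
    v ∈ reachIn adj z (m + 1) ↔ v ∈ reachIn adj z m ∨ ∃ w ∈ reachIn adj z m, adj v w := by
  simp [reachIn]

lemma progress (n k : ℕ) (hk : 3 ≤ k) (hkn : k ^ 2 ≤ n) (adj : Fin n → Fin n → Prop)
    (s z : Fin n) (m : ℕ) : ∀ (v : Fin n) (t : ℕ), v ∈ reachIn adj z m →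
      (runState (obSched n k) k adj s t v).isSome →
      (runState (obSched n k) k adj s
        (t + 2 * (reachIn adj z m).card * phLen n k) z).isSome := by
  have mono : ∀ (t t' : ℕ) (u : Fin n), t ≤ t' → (runState (obSched n k) k adj s t u).isSome →
      (runState (obSched n k) k adj s t' u).isSome := by
    intro t t' u htt h
    obtain ⟨T', hT'⟩ := Option.isSome_iff_exists.1 h
    rw [run_mono htt hT']; rfl
  induction m with
  | zero =>
    intro v t hv h
    simp only [reachIn, Finset.mem_singleton] at hv
    subst hv
    exact mono _ _ _ (by omega) h
  | succ m ih =>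
    intro v t hv h
    have hsub : reachIn adj z m ⊆ reachIn adj z (m + 1) := fun u hu =>
      (mem_reachIn_succ adj z m u).2 (Or.inl hu)
    set A := reachIn adj z (m + 1) \ reachIn adj z m with hAdef
    have hAc : A.card + (reachIn adj z m).card = (reachIn adj z (m + 1)).card :=
      Finset.card_sdiff_add_card_eq_card hsub
    by_cases hvm : v ∈ reachIn adj z m
    · refine mono _ _ _ ?_ (ih v t hvm h)
      have := Finset.card_le_card hsub
      gcongr
    have hApos : 1 ≤ A.card := Finset.card_pos.2 ⟨v, Finset.mem_sdiff.2 ⟨hv, hvm⟩⟩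
    by_cases hex : ∃ u ∈ reachIn adj z m,
        (runState (obSched n k) k adj s (t + (A.card + 1) * phLen n k) u).isSome
    · obtain ⟨u, hu, hus⟩ := hex
      refine mono _ _ _ ?_ (ih u _ hu hus)
      rw [← hAc, add_assoc, ← add_mul]
      gcongr
      omega
    · exfalso
      push Not at hex
      rcases (mem_reachIn_succ adj z m v).1 hv with h' | ⟨w, hw, hvw⟩
      · exact hvm h'
      obtain ⟨T, hT⟩ := Option.isSome_iff_exists.1 h
      obtain ⟨hTt, hTv⟩ := run_first hT
      have hle : T + (A.card + 1) * phLen n k ≤ t + (A.card + 1) * phLen n k := by omega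
      have hwn := run_none hle (Option.not_isSome_iff_eq_none.1 (hex w hw))
      have := layer_bound n k hk hkn adj s v w T A.card hTv hvw hwn A (by
        intro u huw hus
        refine Finset.mem_sdiff.2 ⟨(mem_reachIn_succ adj z m u).2 (Or.inr ⟨w, hw, huw⟩), ?_⟩
        intro hum
        exact hex u hum (mono _ _ _ hle hus))
      omega

/-- There is a constant `C > 0` such that for all `n`, `k` with
`3 ≤ k ≤ √n`, on every `n`-vertex radio network the Oblivious k-Shot schedule,
run under the `k`-shot semantics, informs every vertex within `C·n²/k` steps. -/
theorem oblivious_kshot_upper_bound :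
    ∃ C : ℕ, 0 < C ∧
      ∀ (n k : ℕ), 3 ≤ k → k ^ 2 ≤ n →
        ∀ (adj : Fin n → Fin n → Prop) (s : Fin n), IsNetwork adj s →
          ∀ v : Fin n, (runState (obSched n k) k adj s (C * n ^ 2 / k) v).isSome := by
  refine ⟨160, by norm_num, ?_⟩
  intro n k hk hkn adj s hnet z
  have hreach : ∃ m, s ∈ reachIn adj z m := by
    have hz := hnet z
    clear hnet
    induction hz using Relation.ReflTransGen.head_induction_on with
    | refl => exact ⟨0, by simp [reachIn]⟩
    | head hab _ ih =>
      obtain ⟨m, hm⟩ := ih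
      exact ⟨m + 1, (mem_reachIn_succ adj z m _).2 (Or.inr ⟨_, hm, hab⟩)⟩
  obtain ⟨m, hm⟩ := hreach
  have h := progress n k hk hkn adj s z m s 0 hm (by simp [runState])
  obtain ⟨T, hT⟩ := Option.isSome_iff_exists.1 h
  rw [run_mono ?_ hT]
  · rfl
  rw [Nat.le_div_iff_mul_le (by omega), zero_add]
  have hc : (reachIn adj z m).card ≤ n := by
    simpa using Finset.card_le_univ (reachIn adj z m)
  have hb := phLen_bound n k hk hkn
  calc 2 * (reachIn adj z m).card * phLen n k * k
      = 2 * (reachIn adj z m).card * (phLen n k * k) := by ring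
    _ ≤ 2 * n * (80 * n) := by gcongr
    _ = 160 * n ^ 2 := by ring
end

section
/- Every k-shot transmission tree over a finite set A of cardinality a ≥ 1 has height h satisfying (h+1)^k ≥ a; equivalently, the minimum height of a k-shot transmission tree over an a-element set is at least a^{1/k} − 1, i.e., Ω(a^{1/k}). -/
/-- `TransTree A h k` holds iff there is a `k`-shot transmission tree over the
(nonempty) label set `A` of height at most `h`: a finite binary tree whose nodes are
labeled by nonempty sets, with root labeled `A`, the labels of the children of each
internal node partitioning the label of that node, every leaf labeled by a singleton,
and at most `k` right-child edges on every root-to-leaf path.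
* `leaf`: a leaf labeled `{x}` (any height bound, any budget);
* `leftOnly`: a node whose only child is a left child (its label equals the parent's);
* `rightOnly`: a node whose only child is a right child (its label equals the
  parent's); this consumes one unit of the right-edge budget;
* `node`: a node with both a left and a right child, whose labels partition the
  parent's label; the right child consumes one unit of the right-edge budget. -/
inductive TransTree {α : Type*} [DecidableEq α] : Finset α → ℕ → ℕ → Prop
  | leaf (x : α) (h k : ℕ) : TransTree {x} h k
  | leftOnly {A : Finset α} {h k : ℕ} : TransTree A h k → TransTree A (h + 1) k
  | rightOnly {A : Finset α} {h k : ℕ} : TransTree A h k → TransTree A (h + 1) (k + 1)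
  | node {L R : Finset α} {h k : ℕ} : Disjoint L R → L.Nonempty → R.Nonempty →
      TransTree L h (k + 1) → TransTree R h k → TransTree (L ∪ R) (h + 1) (k + 1)

/-- Every `k`-shot transmission tree over a finite set `A` with
`|A| = a ≥ 1` and height `h` satisfies `(h+1)^k ≥ a`; i.e. the minimum height of a
`k`-shot transmission tree over an `a`-element set is `Ω(a^{1/k})`. -/
theorem transTree_height_lower_bound {α : Type*} [DecidableEq α]
    (A : Finset α) (h k : ℕ) (hk : 1 ≤ k) (hA : A.Nonempty)
    (ht : TransTree A h k) : A.card ≤ (h + 1) ^ k := by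
  clear hk hA
  induction ht with
  | leaf x h k => simpa using Nat.one_le_pow k (h + 1) (Nat.succ_pos h)
  | leftOnly _ ih => exact ih.trans (Nat.pow_le_pow_left (by omega) _)
  | @rightOnly A h k _ ih =>
    calc A.card ≤ (h + 1) ^ k := ih
      _ ≤ (h + 1 + 1) ^ k := Nat.pow_le_pow_left (by omega) _
      _ ≤ (h + 1 + 1) ^ (k + 1) := Nat.pow_le_pow_right (by omega) (by omega)
  | @node L R h k _ _ _ _ _ ihL ihR =>
    calc (L ∪ R).card ≤ L.card + R.card := Finset.card_union_le L R
      _ ≤ (h + 1) ^ (k + 1) + (h + 1) ^ k := Nat.add_le_add ihL ihR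
      _ = (h + 1) ^ k * (h + 1 + 1) := by ring
      _ ≤ (h + 1 + 1) ^ k * (h + 1 + 1) :=
        Nat.mul_le_mul_right _ (Nat.pow_le_pow_left (by omega) _)
      _ = (h + 1 + 1) ^ (k + 1) := (pow_succ _ _).symm
end

section
/- Let 𝒯 be a correct k-shot broadcasting schedule for n. Let S be a sequence of distinct vertices whose first element is designated as the source, occurring in 𝒯, and let T = t(S,0) be the final step of its first occurrence. Let Q ⊆ V ∖ V(S) with |Q| ≥ 2. Then there exists a vertex w ∈ Q that belongs to at least one transmission set after step T and satisfies t_{≤k}(w,T) ≥ T + |Q| − 1. -/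
/-- The sequence `S` of vertices occurs in the schedule `𝒯` after step `T`:
there are steps `T < t₁ < t₂ < …` with the `i`-th element of `S` in `𝒯 tᵢ`. -/
def Occurs {n : ℕ} (𝒯 : ℕ → Finset (Fin n)) : List (Fin n) → ℕ → Prop
  | [], _ => True
  | v :: rest, T => ∃ t : ℕ, T < t ∧ v ∈ 𝒯 t ∧ Occurs 𝒯 rest t

/-- The final step `t(S,T)` of the first occurrence of the sequence `S` after step
`T`: each step is taken minimal in turn (greedily). -/
noncomputable def occEnd {n : ℕ} (𝒯 : ℕ → Finset (Fin n)) : List (Fin n) → ℕ → ℕ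
  | [], T => T
  | v :: rest, T => occEnd 𝒯 rest (sInf {t : ℕ | T < t ∧ v ∈ 𝒯 t})

/-- `tIdx 𝒯 v T i` is the step `t_i(v,T)`: the `i`-th step `t > T` with `v ∈ 𝒯 t`
(and `T` itself for `i = 0`). -/
noncomputable def tIdx {n : ℕ} (𝒯 : ℕ → Finset (Fin n)) (v : Fin n) (T : ℕ) : ℕ → ℕ
  | 0 => T
  | i + 1 => sInf {t : ℕ | tIdx 𝒯 v T i < t ∧ v ∈ 𝒯 t}

/-- `shots 𝒯 k v T`: the number of steps `t > T` with `v ∈ 𝒯 t`, capped at `k`;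
equivalently the largest `i ≤ k` such that `v` occurs `i` times after step `T`. -/
noncomputable def shots {n : ℕ} (𝒯 : ℕ → Finset (Fin n)) (k : ℕ) (v : Fin n) (T : ℕ) : ℕ :=
  sSup {i : ℕ | i ≤ k ∧ Occurs 𝒯 (List.replicate i v) T}

/-- `t_{≤k}(v,T) = t_{shots(v,T)}(v,T)`. -/
noncomputable def tLeK {n : ℕ} (𝒯 : ℕ → Finset (Fin n)) (k : ℕ) (v : Fin n) (T : ℕ) : ℕ :=
  tIdx 𝒯 v T (shots 𝒯 k v T)

theorem cs_occurs_anti {n : ℕ} (𝒯 : ℕ → Finset (Fin n)) (L : List (Fin n)) (T T' : ℕ)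
    (h : T' ≤ T) (ho : Occurs 𝒯 L T) : Occurs 𝒯 L T' := by
  cases L with
  | nil => trivial
  | cons v r =>
    obtain ⟨t, h1, h2, h3⟩ := ho
    exact ⟨t, lt_of_le_of_lt h h1, h2, h3⟩

theorem cs_tIdx_succ {n : ℕ} (𝒯 : ℕ → Finset (Fin n)) (v : Fin n) (T i : ℕ) :
    tIdx 𝒯 v T (i + 1) = tIdx 𝒯 v (sInf {t : ℕ | T < t ∧ v ∈ 𝒯 t}) i := by
  induction i with
  | zero => rfl
  | succ i ih => rw [tIdx, ih]; rfl

theorem cs_count {n : ℕ} (𝒯 : ℕ → Finset (Fin n)) (v : Fin n) (j : ℕ) : ∀ T : ℕ,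
    Occurs 𝒯 (List.replicate j v) T → T ≤ tIdx 𝒯 v T j ∧ ∀ t, tIdx 𝒯 v T j < t → v ∈ 𝒯 t →
      Occurs 𝒯 (List.replicate (j + 1) v) T ∧
      j ≤ ((Finset.Ioo T t).filter (fun t' => v ∈ 𝒯 t')).card := by
  induction j with
  | zero =>
    intro T _
    exact ⟨le_refl _, fun t h1 h2 => ⟨⟨t, h1, h2, trivial⟩, Nat.zero_le _⟩⟩
  | succ j ih =>
    intro T ho
    obtain ⟨t0, h1, h2, h3⟩ := ho
    have hmem := Nat.sInf_mem (s := {t : ℕ | T < t ∧ v ∈ 𝒯 t}) ⟨t0, h1, h2⟩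
    have hle := Nat.sInf_le (s := {t : ℕ | T < t ∧ v ∈ 𝒯 t}) (m := t0) ⟨h1, h2⟩
    rw [cs_tIdx_succ]
    generalize sInf {t : ℕ | T < t ∧ v ∈ 𝒯 t} = T1 at hmem hle ⊢
    obtain ⟨hm1, hm2⟩ := hmem
    obtain ⟨ha, hb⟩ := ih T1 (cs_occurs_anti _ _ _ _ hle h3)
    refine ⟨by omega, fun t ht hv => ?_⟩
    obtain ⟨hc, hd⟩ := hb t ht hv
    refine ⟨⟨T1, hm1, hm2, hc⟩, ?_⟩
    have hsub : insert T1 ((Finset.Ioo T1 t).filter (fun t' => v ∈ 𝒯 t')) ⊆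
        (Finset.Ioo T t).filter (fun t' => v ∈ 𝒯 t') := by
      intro a
      simp only [Finset.mem_insert, Finset.mem_filter, Finset.mem_Ioo]
      rintro (rfl | ⟨⟨h, h'⟩, h''⟩)
      · exact ⟨⟨hm1, by omega⟩, hm2⟩
      · exact ⟨⟨by omega, h'⟩, h''⟩
    have := Finset.card_le_card hsub
    rw [Finset.card_insert_of_notMem (by simp)] at this
    omega

theorem cs_le_tLeK {n : ℕ} (𝒯 : ℕ → Finset (Fin n)) (k T t : ℕ) (v : Fin n)
    (h : transmitsAt 𝒯 k T t v) : t ≤ tLeK 𝒯 k v T := by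
  obtain ⟨h1, h2, h3⟩ := h
  by_contra hlt
  push Not at hlt
  have hbdd : BddAbove {i : ℕ | i ≤ k ∧ Occurs 𝒯 (List.replicate i v) T} :=
    ⟨k, fun i hi => hi.1⟩
  have hmem := Nat.sSup_mem (s := {i : ℕ | i ≤ k ∧ Occurs 𝒯 (List.replicate i v) T})
    ⟨0, Nat.zero_le _, trivial⟩ hbdd
  obtain ⟨ha, hb⟩ := (cs_count 𝒯 v _ T hmem.2).2 t hlt h2
  have := le_csSup hbdd (a := shots 𝒯 k v T + 1)
    ⟨by unfold shots; omega, ha⟩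
  unfold shots at this
  omega

theorem cs_select {α : Type*} [DecidableEq α] (B : ℕ → α → Prop) (m : ℕ) :
    ∀ (D : Finset ℕ) (Y : Finset α), D.card = m → D.card < Y.card →
      ∃ X ⊆ Y, X.Nonempty ∧ ∀ t ∈ D, ¬ ∃! x, x ∈ X ∧ B t x := by
  induction m with
  | zero =>
    intro D Y h1 h2
    refine ⟨Y, subset_rfl, Finset.card_pos.1 (by omega), fun t ht => ?_⟩
    rw [Finset.card_eq_zero] at h1
    simp [h1] at ht
  | succ m ih =>
    intro D Y h1 h2
    by_cases hbad : ∃ t ∈ D, ∃! x, x ∈ Y ∧ B t x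
    · obtain ⟨t, ht, x, ⟨hx, hB⟩, hu⟩ := hbad
      have e1 := Finset.card_erase_of_mem ht
      have e2 := Finset.card_erase_of_mem hx
      obtain ⟨X, hXY, hne, hX⟩ := ih (D.erase t) (Y.erase x) (by omega) (by omega)
      refine ⟨X, hXY.trans (Finset.erase_subset _ _), hne, fun t' ht' => ?_⟩
      by_cases htt : t' = t
      · subst htt
        rintro ⟨y, ⟨hy, hBy⟩, -⟩
        have hy' := Finset.mem_erase.1 (hXY hy)
        exact hy'.1 (hu y ⟨hy'.2, hBy⟩)
      · exact hX t' (Finset.mem_erase.2 ⟨htt, ht'⟩)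
    · push Not at hbad
      exact ⟨Y, subset_rfl, Finset.card_pos.1 (by omega), hbad⟩

open Classical in
theorem cs_run_zero {n : ℕ} (𝒯 : ℕ → Finset (Fin n)) (k : ℕ) (adj : Fin n → Fin n → Prop)
    (s v : Fin n) : runState 𝒯 k adj s 0 v = if v = s then some 0 else none := rfl

open Classical in
theorem cs_run_succ {n : ℕ} (𝒯 : ℕ → Finset (Fin n)) (k : ℕ) (adj : Fin n → Fin n → Prop)
    (s w : Fin n) (t : ℕ) : runState 𝒯 k adj s (t + 1) w =
      match runState 𝒯 k adj s t w with
      | some T => some T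
      | none =>
          if ∃! v : Fin n, adj v w ∧
              ∃ T, runState 𝒯 k adj s t v = some T ∧ transmitsAt 𝒯 k T (t + 1) v
          then some (t + 1) else none := rfl

section
variable {n : ℕ} (𝒯 : ℕ → Finset (Fin n)) (k : ℕ) (adj : Fin n → Fin n → Prop) (s : Fin n)

theorem cs_persist {t : ℕ} {w : Fin n} {T : ℕ} (h : runState 𝒯 k adj s t w = some T) (t' : ℕ)
    (ht : t ≤ t') : runState 𝒯 k adj s t' w = some T := by
  induction t', ht using Nat.le_induction with
  | base => exact h
  | succ m _ ih => rw [cs_run_succ, ih]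

theorem cs_le {w : Fin n} {T : ℕ} (t : ℕ) (h : runState 𝒯 k adj s t w = some T) : T ≤ t := by
  induction t with
  | zero =>
    rw [cs_run_zero] at h
    split_ifs at h
    simp at h; omega
  | succ t ih =>
    rw [cs_run_succ] at h
    cases hr : runState 𝒯 k adj s t w with
    | some T' =>
      rw [hr] at h ih
      have := ih h
      omega
    | none =>
      rw [hr] at h
      simp only at h
      split_ifs at h
      simp at h; omega

theorem cs_unique {w : Fin n} {T t T' t' : ℕ} (h : runState 𝒯 k adj s t w = some T)
    (h' : runState 𝒯 k adj s t' w = some T') : T = T' := by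
  have a := cs_persist 𝒯 k adj s h (max t t') (le_max_left _ _)
  have b := cs_persist 𝒯 k adj s h' (max t t') (le_max_right _ _)
  rw [a] at b
  exact Option.some.inj b

theorem cs_step (hk : 1 ≤ k) {u w : Fin n} (hws : w ≠ s) (hin : ∀ x, adj x w ↔ x = u) {T0 : ℕ}
    (hu : runState 𝒯 k adj s T0 u = some T0) (hex : ∃ t, T0 < t ∧ u ∈ 𝒯 t) :
    runState 𝒯 k adj s (sInf {t : ℕ | T0 < t ∧ u ∈ 𝒯 t}) w =
      some (sInf {t : ℕ | T0 < t ∧ u ∈ 𝒯 t}) := by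
  have hmem := Nat.sInf_mem (s := {t : ℕ | T0 < t ∧ u ∈ 𝒯 t}) hex
  have hle : ∀ t, T0 < t → u ∈ 𝒯 t → sInf {t : ℕ | T0 < t ∧ u ∈ 𝒯 t} ≤ t := fun t h1 h2 =>
    Nat.sInf_le (s := {t : ℕ | T0 < t ∧ u ∈ 𝒯 t}) ⟨h1, h2⟩
  generalize sInf {t : ℕ | T0 < t ∧ u ∈ 𝒯 t} = T1 at hmem hle ⊢
  obtain ⟨hm1, hm2⟩ := hmem
  have hnone : ∀ t, t < T1 → runState 𝒯 k adj s t w = none := by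
    intro t
    induction t with
    | zero => intro _; rw [cs_run_zero, if_neg hws]
    | succ t ih =>
      intro ht
      rw [cs_run_succ, ih (by omega)]
      simp only
      rw [if_neg]
      rintro ⟨x, ⟨hx, T, hT, htr⟩, -⟩
      rw [hin] at hx
      subst hx
      have := cs_unique 𝒯 k adj s hT hu
      subst this
      have := hle _ htr.1 htr.2.1
      omega
  obtain ⟨m, rfl⟩ : ∃ m, T1 = m + 1 := ⟨T1 - 1, by omega⟩
  rw [cs_run_succ, hnone m (by omega)]
  simp only
  rw [if_pos]
  refine ⟨u, ⟨(hin u).2 rfl, T0, cs_persist 𝒯 k adj s hu m (by omega), hm1, hm2, ?_⟩,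
    fun y hy => (hin y).1 hy.1⟩
  rw [Finset.filter_false_of_mem]
  · rw [Finset.card_empty]; omega
  · intro t ht hmt
    rw [Finset.mem_Ioo] at ht
    have := hle t ht.1 hmt
    omega

theorem cs_path (hk : 1 ≤ k) (x : Fin n) (l : List (Fin n)) : ∀ (v : Fin n) (T0 : ℕ),
    runState 𝒯 k adj s T0 v = some T0 →
    List.IsChain (fun u w => w ≠ s ∧ ∀ y, adj y w ↔ y = u) (v :: (l ++ [x])) →
    Occurs 𝒯 (v :: l) T0 →
    runState 𝒯 k adj s (occEnd 𝒯 (v :: l) T0) x = some (occEnd 𝒯 (v :: l) T0) := by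
  induction l with
  | nil =>
    intro v T0 hv hc ho
    obtain ⟨t, h1, h2, -⟩ := ho
    have hc' : x ≠ s ∧ ∀ y, adj y x ↔ y = v := by simpa using hc
    exact cs_step 𝒯 k adj s hk hc'.1 hc'.2 hv ⟨t, h1, h2⟩
  | cons u l ih =>
    intro v T0 hv hc ho
    obtain ⟨t, h1, h2, h3⟩ := ho
    rw [List.cons_append, List.isChain_cons_cons] at hc
    have := cs_step 𝒯 k adj s hk hc.1.1 hc.1.2 hv ⟨t, h1, h2⟩
    exact ih u _ this hc.2 (cs_occurs_anti _ _ _ _ (Nat.sInf_le ⟨h1, h2⟩) h3)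
end

/-- The network: path along `S`, last of `S` to `X`, `X` to `z`, source to all others. -/
def csAdj {n : ℕ} (S : List (Fin n)) (X : Finset (Fin n)) (z : Fin n) (u w : Fin n) : Prop :=
  (∃ i, ∃ h : i + 1 < S.length, S[i] = u ∧ S[i + 1] = w) ∨
  (w ∈ X ∧ S.getLast? = some u) ∨ (w = z ∧ u ∈ X) ∨
  (w ∉ S ∧ w ∉ X ∧ w ≠ z ∧ S.head? = some u)

theorem confl_sub (n k : ℕ) (hn : 2 ≤ n) (hk : 1 ≤ k)
    (𝒯 : ℕ → Finset (Fin n)) (hcorr : CorrectSchedule n k 𝒯)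
    (S : List (Fin n)) (hSne : S ≠ []) (hSnd : S.Nodup) (hSocc : Occurs 𝒯 S 0)
    (Q : Finset (Fin n)) (hQS : ∀ v ∈ Q, v ∉ S) (hQ2 : 2 ≤ Q.card) :
    ∃ w ∈ Q,
      (∃ t : ℕ, occEnd 𝒯 S 0 < t ∧ w ∈ 𝒯 t) ∧
      occEnd 𝒯 S 0 + Q.card - 1 ≤ tLeK 𝒯 k w (occEnd 𝒯 S 0) := by
  by_contra hcon
  push Not at hcon
  obtain ⟨z, hz⟩ : Q.Nonempty := Finset.card_pos.1 (by omega)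
  have hzc := Finset.card_erase_of_mem hz
  obtain ⟨X, hXQ, ⟨x0, hx0⟩, hX⟩ := cs_select
    (fun t v => transmitsAt 𝒯 k (occEnd 𝒯 S 0) t v) _
    (Finset.Ioo (occEnd 𝒯 S 0) (occEnd 𝒯 S 0 + Q.card - 1)) (Q.erase z) rfl
    (by rw [Nat.card_Ioo, hzc]; omega)
  have hXS : ∀ v ∈ X, v ∉ S := fun v hv => hQS v (Finset.mem_of_mem_erase (hXQ hv))
  have hzX : z ∉ X := fun h => Finset.notMem_erase z Q (hXQ h)
  have hzS : z ∉ S := hQS z hz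
  have hxz : ∀ v ∈ X, v ≠ z := fun v hv h => hzX (h ▸ hv)
  have hlate : ∀ v ∈ X, ∀ t, transmitsAt 𝒯 k (occEnd 𝒯 S 0) t v →
      t ∈ Finset.Ioo (occEnd 𝒯 S 0) (occEnd 𝒯 S 0 + Q.card - 1) := by
    intro v hv t ht
    have := hcon v (Finset.mem_of_mem_erase (hXQ hv)) ⟨t, ht.1, ht.2.1⟩
    have := cs_le_tLeK _ _ _ _ _ ht
    exact Finset.mem_Ioo.2 ⟨ht.1, by omega⟩
  obtain ⟨s, l, rfl⟩ := List.exists_cons_of_ne_nil hSne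
  have hlast : ∃ a, (s :: l).getLast? = some a := ⟨_, List.getLast?_eq_some_getLast hSne⟩
  -- in-neighbourhoods
  have hinX : ∀ v ∈ X, ∀ y, csAdj (s :: l) X z y v ↔ (s :: l).getLast? = some y := by
    intro v hv y
    constructor
    · rintro (⟨i, h, -, rfl⟩ | ⟨-, h⟩ | ⟨h, -⟩ | ⟨-, h, -⟩)
      · exact absurd (List.getElem_mem _) (hXS _ hv)
      · exact h
      · exact absurd h (hxz v hv)
      · exact absurd hv h
    · exact fun h => Or.inr (Or.inl ⟨hv, h⟩)
  have hinS : ∀ i (h : i + 1 < (s :: l).length), ∀ y,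
      csAdj (s :: l) X z y (s :: l)[i + 1] ↔ y = (s :: l)[i] := by
    intro i h y
    constructor
    · rintro (⟨j, hj, rfl, he⟩ | ⟨h', -⟩ | ⟨h', -⟩ | ⟨h', -⟩)
      · have := (hSnd.getElem_inj_iff).1 he
        have : j = i := by omega
        subst this
        rfl
      · exact absurd (List.getElem_mem _) (hXS _ h')
      · exact absurd (h' ▸ List.getElem_mem _) hzS
      · exact absurd (List.getElem_mem _) h'
    · rintro rfl
      exact Or.inl ⟨i, h, rfl, rfl⟩
  have hinz : ∀ y, csAdj (s :: l) X z y z ↔ y ∈ X := by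
    intro y
    constructor
    · rintro (⟨i, h, -, he⟩ | ⟨h', -⟩ | ⟨-, h'⟩ | ⟨-, -, h', -⟩)
      · exact absurd (he ▸ List.getElem_mem _) hzS
      · exact absurd h' hzX
      · exact h'
      · exact absurd rfl h'
    · exact fun h => Or.inr (Or.inr (Or.inl ⟨rfl, h⟩))
  -- reachability
  have hreachS : ∀ i (h : i < (s :: l).length),
      Relation.ReflTransGen (csAdj (s :: l) X z) s (s :: l)[i] := by
    intro i
    induction i with
    | zero => intro _; exact Relation.ReflTransGen.refl
    | succ i ih =>
      intro h
      exact (ih (by omega)).tail ((hinS i h _).2 rfl)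
  have hreachX : ∀ v ∈ X, Relation.ReflTransGen (csAdj (s :: l) X z) s v := by
    intro v hv
    obtain ⟨a, ha⟩ := hlast
    obtain ⟨i, hi, rfl⟩ := List.getElem_of_mem (List.mem_of_getLast? ha)
    exact (hreachS i hi).tail ((hinX v hv _).2 ha)
  have hnet : IsNetwork (csAdj (s :: l) X z) s := by
    intro v
    by_cases h1 : v ∈ s :: l
    · obtain ⟨i, hi, rfl⟩ := List.getElem_of_mem h1
      exact hreachS i hi
    by_cases h2 : v ∈ X
    · exact hreachX v h2
    by_cases h3 : v = z
    · subst h3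
      exact (hreachX x0 hx0).tail ((hinz _).2 hx0)
    · exact Relation.ReflTransGen.single (Or.inr (Or.inr (Or.inr ⟨h1, h2, h3, rfl⟩)))
  -- the vertices of X are informed exactly at step T
  have hinf : ∀ v ∈ X, runState 𝒯 k (csAdj (s :: l) X z) s (occEnd 𝒯 (s :: l) 0) v =
      some (occEnd 𝒯 (s :: l) 0) := by
    intro v hv
    refine cs_path 𝒯 k _ s hk v l s 0 (by rw [cs_run_zero, if_pos rfl]) ?_ hSocc
    rw [← List.cons_append, List.isChain_append]
    refine ⟨?_, by simp, ?_⟩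
    · rw [List.isChain_iff_getElem]
      intro i hi
      refine ⟨fun he => ?_, hinS i hi⟩
      have he' : (s :: l)[i + 1] = (s :: l)[0] := he
      have := (hSnd.getElem_inj_iff).1 he'
      omega
    · intro a ha b hb
      have hb' : b = v := by simpa using hb.symm
      subst hb'
      refine ⟨fun h => hXS _ hv (h ▸ List.mem_cons_self), fun y => ?_⟩
      rw [hinX _ hv, Option.mem_def.1 ha, Option.some_inj]
      exact eq_comm
  have hnever : ∀ t, runState 𝒯 k (csAdj (s :: l) X z) s t z = none := by
    intro t
    induction t with
    | zero => rw [cs_run_zero, if_neg (fun h : z = s => hzS (h ▸ List.mem_cons_self))]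
    | succ t ih =>
      rw [cs_run_succ, ih]
      simp only
      rw [if_neg]
      rintro ⟨x, ⟨hx, T', hT', htr⟩, hu⟩
      rw [hinz] at hx
      have := cs_unique 𝒯 k _ s hT' (hinf x hx)
      subst this
      refine hX (t + 1) (hlate x hx _ htr) ⟨x, ⟨hx, htr⟩, ?_⟩
      rintro y ⟨hy, hytr⟩
      have hlt := hytr.1
      exact hu y ⟨(hinz y).2 hy, _, cs_persist 𝒯 k _ s (hinf y hy) t (by omega), hytr⟩
  obtain ⟨t, ht⟩ := hcorr _ s hnet z
  rw [hnever t] at ht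
  simp at ht
end

section
/- Let 𝒯 be a correct k-shot broadcasting schedule for n. Let S be a sequence of distinct vertices whose first element is designated as the source, with |V(S)| + k < n, occurring in 𝒯, and let T = t(S,0) be the final step of its first occurrence. Then there exists a sequence R of at most k distinct vertices of V ∖ V(S) such that t(R,T) ≥ T + n − |V(S)| − k. -/
theorem occurs_mono {n : ℕ} (𝒯 : ℕ → Finset (Fin n)) (l : List (Fin n)) {T T' : ℕ}
    (h : T' ≤ T) (ho : Occurs 𝒯 l T) : Occurs 𝒯 l T' := by
  cases l with
  | nil => trivial
  | cons v r =>
    obtain ⟨t, h1, h2, h3⟩ := ho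
    exact ⟨t, by omega, h2, h3⟩

theorem occurs_split {n : ℕ} (𝒯 : ℕ → Finset (Fin n)) (l l' : List (Fin n)) :
    ∀ T, Occurs 𝒯 (l ++ l') T → Occurs 𝒯 l' (occEnd 𝒯 l T) := by
  induction l with
  | nil => intro T h; exact h
  | cons v r ih =>
    intro T h
    obtain ⟨t, h1, h2, h3⟩ := h
    refine ih _ (occurs_mono 𝒯 _ ?_ h3)
    exact Nat.sInf_le ⟨h1, h2⟩

theorem occurs_join {n : ℕ} (𝒯 : ℕ → Finset (Fin n)) (l l' : List (Fin n)) :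
    ∀ T, Occurs 𝒯 l T → Occurs 𝒯 l' (occEnd 𝒯 l T) → Occurs 𝒯 (l ++ l') T := by
  induction l with
  | nil => intro T _ h; exact h
  | cons v r ih =>
    intro T h h'
    obtain ⟨t, h1, h2, h3⟩ := h
    have hmem : sInf {t : ℕ | T < t ∧ v ∈ 𝒯 t} ∈ {t : ℕ | T < t ∧ v ∈ 𝒯 t} :=
      Nat.sInf_mem ⟨t, h1, h2⟩
    refine ⟨sInf {t : ℕ | T < t ∧ v ∈ 𝒯 t}, hmem.1, hmem.2, ih _ ?_ h'⟩
    exact occurs_mono 𝒯 _ (Nat.sInf_le ⟨h1, h2⟩) h3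

theorem occEnd_snoc {n : ℕ} (𝒯 : ℕ → Finset (Fin n)) (l : List (Fin n)) (v : Fin n) :
    ∀ T, occEnd 𝒯 (l ++ [v]) T = sInf {t : ℕ | occEnd 𝒯 l T < t ∧ v ∈ 𝒯 t} := by
  induction l with
  | nil => intro T; rfl
  | cons u r ih => intro T; exact ih _

/-- Peeling argument. -/
theorem peel {α : Type*} [DecidableEq α] (P : α → ℕ → Prop) (I : Finset ℕ) (A : Finset α)
    (h : ∀ B ⊆ A, B.Nonempty → ∃ t ∈ I, ∃! a, a ∈ B ∧ P a t) : A.card ≤ I.card := by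
  have key : ∀ m : ℕ, ∀ B ⊆ A, B.card = m →
      ∃ J ⊆ I, B.card ≤ J.card ∧ ∀ t ∈ J, ∃ a ∈ B, P a t := by
    intro m
    induction m with
    | zero => intro B _ hB; exact ⟨∅, by simp, by simp [hB], by simp⟩
    | succ m ih =>
      intro B hBA hB
      obtain ⟨t, htI, a, ⟨haB, hP⟩, huniq⟩ := h B hBA (Finset.card_pos.mp (by omega))
      have hc := Finset.card_erase_of_mem haB
      obtain ⟨J, hJI, hcard, hJ⟩ := ih (B.erase a) ((Finset.erase_subset _ _).trans hBA) (by omega)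
      have htJ : t ∉ J := by
        intro htJ
        obtain ⟨a', ha', hP'⟩ := hJ t htJ
        rw [Finset.mem_erase] at ha'
        exact ha'.1 (huniq a' ⟨ha'.2, hP'⟩)
      refine ⟨insert t J, Finset.insert_subset htI hJI, ?_, ?_⟩
      · rw [Finset.card_insert_of_notMem htJ]; omega
      · intro s hs
        rcases Finset.mem_insert.mp hs with rfl | hs
        · exact ⟨a, haB, hP⟩
        · obtain ⟨a', ha', hP'⟩ := hJ s hs
          exact ⟨a', Finset.mem_of_mem_erase ha', hP'⟩
  obtain ⟨J, hJI, hc, _⟩ := key _ A (Finset.Subset.refl _) rfl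
  exact hc.trans (Finset.card_le_card hJI)

/-- Greedy choice of the sequence `R`. -/
theorem greedy {n : ℕ} (𝒯 : ℕ → Finset (Fin n)) (T : ℕ) (W : Finset (Fin n)) (j : ℕ) :
    ∃ R : List (Fin n), R.Nodup ∧ R.length ≤ j ∧ (∀ v ∈ R, v ∈ W) ∧ Occurs 𝒯 R T ∧
      T ≤ occEnd 𝒯 R T ∧
      ∀ v ∈ W, v ∉ R → (∃ t, occEnd 𝒯 R T < t ∧ v ∈ 𝒯 t) →
        j ≤ ((Finset.Ioc T (occEnd 𝒯 R T)).filter (fun t => v ∈ 𝒯 t)).card := by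
  induction j with
  | zero => exact ⟨[], by simp, by simp, by simp, trivial, le_refl _, by simp⟩
  | succ j ih =>
    obtain ⟨R, hnd, hlen, hW, hocc, hTE, hR⟩ := ih
    set E := occEnd 𝒯 R T with hE
    classical
    set C := W.filter (fun v => v ∉ R ∧ ∃ t, E < t ∧ v ∈ 𝒯 t) with hC
    rcases C.eq_empty_or_nonempty with hCe | hCn
    · refine ⟨R, hnd, by omega, hW, hocc, hTE, ?_⟩
      intro v hv hvR hex
      have : v ∈ C := by rw [hC, Finset.mem_filter]; exact ⟨hv, hvR, hex⟩
      rw [hCe] at this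
      simp at this
    · obtain ⟨u, huC, hmax⟩ := C.exists_max_image (fun v => sInf {t : ℕ | E < t ∧ v ∈ 𝒯 t}) hCn
      have huC' := huC
      rw [hC, Finset.mem_filter] at huC'
      obtain ⟨huW, huR, hune⟩ := huC'
      have hu := Nat.sInf_mem (s := {t : ℕ | E < t ∧ u ∈ 𝒯 t}) hune
      have hend : occEnd 𝒯 (R ++ [u]) T = sInf {t : ℕ | E < t ∧ u ∈ 𝒯 t} := occEnd_snoc 𝒯 R u T
      refine ⟨R ++ [u], ?_, ?_, ?_, ?_, ?_, ?_⟩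
      · rw [List.nodup_append]
        refine ⟨hnd, by simp, ?_⟩
        intro a ha b hb hab
        simp at hb
        subst hb; subst hab; exact huR ha
      · simp; omega
      · intro v hv
        rcases List.mem_append.mp hv with hv | hv
        · exact hW v hv
        · simp at hv; rw [hv]; exact huW
      · apply occurs_join 𝒯 _ _ _ hocc
        obtain ⟨t, h1, h2⟩ := hune
        exact ⟨t, h1, h2, trivial⟩
      · rw [hend]; have := hu.1; omega
      · rw [hend]
        intro v hv hvR hex
        obtain ⟨t, ht, hvt⟩ := hex
        have huE := hu.1
        have hvR1 : v ∉ R := fun h => hvR (List.mem_append_left _ h)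
        have hex' : ∃ t, E < t ∧ v ∈ 𝒯 t := ⟨t, by omega, hvt⟩
        have hvC : v ∈ C := by rw [hC, Finset.mem_filter]; exact ⟨hv, hvR1, hex'⟩
        have hle := hmax v hvC
        have hvm := Nat.sInf_mem (s := {t : ℕ | E < t ∧ v ∈ 𝒯 t}) hex'
        have hj := hR v hv hvR1 hex'
        have hvE := hvm.1
        have hlt : ((Finset.Ioc T E).filter (fun t => v ∈ 𝒯 t)).card <
            ((Finset.Ioc T (sInf {t : ℕ | E < t ∧ u ∈ 𝒯 t})).filter (fun t => v ∈ 𝒯 t)).card := by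
          apply Finset.card_lt_card
          rw [Finset.ssubset_iff_of_subset]
          · refine ⟨sInf {t : ℕ | E < t ∧ v ∈ 𝒯 t}, ?_, ?_⟩
            · rw [Finset.mem_filter, Finset.mem_Ioc]
              exact ⟨⟨by omega, hle⟩, hvm.2⟩
            · rw [Finset.mem_filter, Finset.mem_Ioc]
              rintro ⟨⟨_, h⟩, _⟩
              omega
          · intro s
            simp only [Finset.mem_filter, Finset.mem_Ioc]
            rintro ⟨⟨h1, h2⟩, h3⟩
            exact ⟨⟨h1, by omega⟩, h3⟩
        omega

/-- The adversarial network: path along `S`, then a star, then `A → x`. -/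
def advAdj {n : ℕ} (S : List (Fin n)) (A : Finset (Fin n)) (x : Fin n) (u w : Fin n) : Prop :=
  (w = x ∧ u ∈ A) ∨ (w ≠ x ∧ u ∈ S ∧ S.idxOf u + 1 = S.idxOf w)

theorem isolate {n k : ℕ} (hk : 1 ≤ k)
    (𝒯 : ℕ → Finset (Fin n)) (hcorr : CorrectSchedule n k 𝒯)
    (S : List (Fin n)) (hSne : S ≠ []) (hSnd : S.Nodup) (hSocc : Occurs 𝒯 S 0)
    (A : Finset (Fin n)) (hA : A.Nonempty) (hAS : ∀ a ∈ A, a ∉ S)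
    (x : Fin n) (hxS : x ∉ S) (hxA : x ∉ A) :
    ∃ t, ∃! a, a ∈ A ∧ transmitsAt 𝒯 k (occEnd 𝒯 S 0) t a := by
  have hpos : 0 < S.length := List.length_pos_iff.mpr hSne
  set s := S[0] with hs
  have hsS : s ∈ S := List.getElem_mem hpos
  have hsi : S.idxOf s = 0 := hSnd.idxOf_getElem 0 hpos
  set τ : ℕ → ℕ := fun i => occEnd 𝒯 (S.take i) 0 with hτ
  have hτ0 : τ 0 = 0 := by simp [hτ, occEnd]
  have hτm : τ S.length = occEnd 𝒯 S 0 := by simp [hτ]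
  have hτs : ∀ i (h : i < S.length), τ (i+1) = sInf {t : ℕ | τ i < t ∧ S[i] ∈ 𝒯 t} := by
    intro i h
    simp only [hτ]
    rw [← List.take_concat_get' S i h]
    exact occEnd_snoc 𝒯 _ _ _
  have hne : ∀ i (h : i < S.length), ∃ t, τ i < t ∧ S[i] ∈ 𝒯 t := by
    intro i h
    have h1 : Occurs 𝒯 (S.take i ++ S.drop i) 0 := by rw [List.take_append_drop]; exact hSocc
    have h2 := occurs_split 𝒯 _ _ _ h1
    rw [List.drop_eq_getElem_cons h] at h2
    obtain ⟨t, h3, h4, _⟩ := h2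
    exact ⟨t, h3, h4⟩
  have hidxle : ∀ w, S.idxOf w ≤ S.length := fun w => List.idxOf_le_length
  have hxs : x ≠ s := fun h => hxS (h ▸ hsS)
  -- characterization of in-neighbours
  have hpred : ∀ w q, w ≠ x → S.idxOf w = q + 1 → ∃ h : q < S.length,
      ∀ u, advAdj S A x u w ↔ u = S[q] := by
    intro w q hwx hw
    have hq : q < S.length := by have := hidxle w; omega
    refine ⟨hq, fun u => ⟨?_, ?_⟩⟩
    · rintro (⟨h, _⟩ | ⟨_, hu, hi⟩)
      · exact absurd h hwx
      · have hq' : S.idxOf u = q := by omega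
        subst hq'
        simp
    · rintro rfl
      exact Or.inr ⟨hwx, List.getElem_mem hq, by rw [hSnd.idxOf_getElem q hq, hw]⟩
  have hzero : ∀ w, S.idxOf w = 0 → w = s := by
    intro w hw
    have hl : S.idxOf w < S.length := by omega
    have := List.getElem_idxOf hl
    rw [← this, hs]
    congr 1
  have hnet : IsNetwork (advAdj S A x) s := by
    have h1 : ∀ p w, w ≠ x → S.idxOf w = p → Relation.ReflTransGen (advAdj S A x) s w := by
      intro p
      induction p with
      | zero => intro w _ hw; rw [hzero w hw]
      | succ q ih =>
        intro w hwx hw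
        obtain ⟨hq, hadj⟩ := hpred w q hwx hw
        refine Relation.ReflTransGen.tail (ih S[q] ?_ (hSnd.idxOf_getElem q hq)) ((hadj _).mpr rfl)
        intro h
        exact hxS (h ▸ List.getElem_mem hq)
    intro w
    by_cases hwx : w = x
    · obtain ⟨a, ha⟩ := hA
      refine Relation.ReflTransGen.tail (h1 _ a ?_ rfl) (Or.inl ⟨hwx, ha⟩)
      rintro rfl
      exact hxA ha
    · exact h1 _ w hwx rfl
  have hrun : ∀ t w, w ≠ x → runState 𝒯 k (advAdj S A x) s t w =
      if τ (S.idxOf w) ≤ t then some (τ (S.idxOf w)) else none := by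
    intro t
    induction t with
    | zero =>
      intro w hwx
      simp only [runState]
      by_cases hw : w = s
      · rw [if_pos hw, hw, hsi, hτ0]; simp
      · rw [if_neg hw, if_neg]
        obtain ⟨q, hq⟩ : ∃ q, S.idxOf w = q + 1 :=
          Nat.exists_eq_succ_of_ne_zero (fun h => hw (hzero w h))
        obtain ⟨hql, _⟩ := hpred w q hwx hq
        rw [hq, hτs q hql]
        have := (Nat.sInf_mem (s := {t : ℕ | τ q < t ∧ S[q] ∈ 𝒯 t}) (hne q hql)).1
        omega
    | succ t ih =>
      intro w hwx
      simp only [runState]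
      rw [ih w hwx]
      by_cases hle : τ (S.idxOf w) ≤ t
      · have hle' : τ (S.idxOf w) ≤ t + 1 := by omega
        simp only [if_pos hle, if_pos hle']
      · rw [if_neg hle]
        simp only
        obtain ⟨q, hq⟩ : ∃ q, S.idxOf w = q + 1 := by
          apply Nat.exists_eq_succ_of_ne_zero
          intro h
          rw [h, hτ0] at hle
          omega
        obtain ⟨hql, hadj⟩ := hpred w q hwx hq
        have hux : S[q] ≠ x := fun h => hxS (h ▸ List.getElem_mem hql)
        have hru := ih S[q] hux
        rw [hSnd.idxOf_getElem q hql] at hru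
        have hmem := Nat.sInf_mem (s := {t : ℕ | τ q < t ∧ S[q] ∈ 𝒯 t}) (hne q hql)
        rw [← hτs q hql] at hmem
        obtain ⟨hm1, hm2⟩ := hmem
        rw [hq] at hle ⊢
        by_cases heq : τ (q+1) = t + 1
        · rw [if_pos (show τ (q+1) ≤ t + 1 by omega), if_pos, heq]
          refine ⟨S[q], ⟨(hadj _).mpr rfl, τ q, ?_, ?_, ?_, ?_⟩, ?_⟩
          · rw [hru, if_pos (by omega)]
          · omega
          · rw [← heq]; exact hm2
          · rw [Finset.filter_eq_empty_iff.mpr]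
            · simp; omega
            · intro t' ht' hmem'
              rw [Finset.mem_Ioo] at ht'
              have : τ (q+1) ≤ t' := by
                rw [hτs q hql]; exact Nat.sInf_le ⟨ht'.1, hmem'⟩
              omega
          · rintro y ⟨hy, _⟩
            exact (hadj y).mp hy
        · rw [if_neg (show ¬ τ (q+1) ≤ t + 1 by omega), if_neg]
          rintro ⟨y, ⟨hy, T', hT', htr⟩, _⟩
          rw [(hadj y).mp hy] at hT' htr
          rw [hru] at hT'
          split_ifs at hT' with hc
          have hT'' : τ q = T' := by simpa using hT'
          rw [← hT''] at htr
          have : τ (q+1) ≤ t + 1 := by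
            rw [hτs q hql]; exact Nat.sInf_le ⟨htr.1, htr.2.1⟩
          omega
  obtain ⟨t, ht⟩ := hcorr _ _ hnet x
  induction t with
  | zero => simp [runState, hxs] at ht
  | succ t ih =>
    cases hrx : runState 𝒯 k (advAdj S A x) s t x with
    | some T' => exact ih (by rw [hrx]; rfl)
    | none =>
      simp only [runState, hrx] at ht
      split_ifs at ht with hex
      · refine ⟨t + 1, ?_⟩
        have hiff : ∀ v, (advAdj S A x v x ∧ ∃ T', runState 𝒯 k (advAdj S A x) s t v = some T' ∧
            transmitsAt 𝒯 k T' (t + 1) v) ↔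
            (v ∈ A ∧ transmitsAt 𝒯 k (occEnd 𝒯 S 0) (t+1) v) := by
          intro v
          have hadj : advAdj S A x v x ↔ v ∈ A := by simp [advAdj]
          rw [hadj]
          refine and_congr_right (fun hv => ?_)
          have hvx : v ≠ x := by rintro rfl; exact hxA hv
          rw [hrun t v hvx, List.idxOf_eq_length (hAS v hv), hτm]
          constructor
          · rintro ⟨T', h1, h2⟩
            split_ifs at h1
            have h3 : occEnd 𝒯 S 0 = T' := by simpa using h1
            rw [h3]; exact h2
          · intro h
            have := h.1
            exact ⟨_, if_pos (by omega), h⟩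
        simpa only [hiff] using hex
      · simp at ht

/-- Let `𝒯` be a correct `k`-shot broadcasting schedule for `n`, `S`
a sequence of distinct vertices (its first element designated as the source) with
`|V(S)| + k < n`, occurring in `𝒯`, and `T = t(S,0)` the final step of its first
occurrence.  Then there is a sequence `R` of at most `k` distinct vertices of
`V ∖ V(S)` occurring after `T` with `t(R,T) ≥ T + n − |V(S)| − k`. -/
theorem sub_k (n k : ℕ) (hn : 2 ≤ n) (hk : 1 ≤ k)
    (𝒯 : ℕ → Finset (Fin n)) (hcorr : CorrectSchedule n k 𝒯)
    (S : List (Fin n)) (hSne : S ≠ []) (hSnd : S.Nodup) (hSocc : Occurs 𝒯 S 0)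
    (hlen : S.length + k < n) :
    ∃ R : List (Fin n), R.Nodup ∧ R.length ≤ k ∧ (∀ v ∈ R, v ∉ S) ∧
      Occurs 𝒯 R (occEnd 𝒯 S 0) ∧
      occEnd 𝒯 S 0 + n - S.length - k ≤ occEnd 𝒯 R (occEnd 𝒯 S 0) := by
  classical
  set T := occEnd 𝒯 S 0 with hT
  set W : Finset (Fin n) := Finset.univ \ S.toFinset with hW
  have hWc : W.card = n - S.length := by
    rw [hW, Finset.card_sdiff_of_subset (Finset.subset_univ _), List.toFinset_card_of_nodup hSnd]
    simp
  have hWm : ∀ v, v ∈ W ↔ v ∉ S := by intro v; simp [hW]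
  obtain ⟨R, hnd, hRl, hRW, hocc, hTE, hR⟩ := greedy 𝒯 T W k
  set E := occEnd 𝒯 R T with hE
  refine ⟨R, hnd, hRl, fun v hv => (hWm v).mp (hRW v hv), hocc, ?_⟩
  have main : ∀ x ∈ W, ∀ A ⊆ W, x ∉ A → (∀ a ∈ A, a ∉ R) → A.card ≤ E - T := by
    intro x hx A hAW hxA hAR
    rw [← Nat.card_Ioc]
    apply peel (fun a t => transmitsAt 𝒯 k T t a)
    intro B hBA hB
    obtain ⟨t, ht⟩ := isolate hk 𝒯 hcorr S hSne hSnd hSocc B hB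
      (fun a ha => (hWm a).mp (hAW (hBA ha))) x ((hWm x).mp hx) (fun h => hxA (hBA h))
    refine ⟨t, ?_, ht⟩
    obtain ⟨a, ⟨haB, h1, h2, h3⟩, _⟩ := ht
    rw [Finset.mem_Ioc]
    refine ⟨h1, ?_⟩
    by_contra hlt
    have hc := hR a (hAW (hBA haB)) (hAR a (hBA haB)) ⟨t, by omega, h2⟩
    have : ((Finset.Ioc T E).filter (fun t => a ∈ 𝒯 t)).card ≤
        ((Finset.Ioo T t).filter (fun t => a ∈ 𝒯 t)).card := by
      apply Finset.card_le_card
      intro s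
      simp only [Finset.mem_filter, Finset.mem_Ioc, Finset.mem_Ioo]
      rintro ⟨⟨h1, h2⟩, h3⟩
      exact ⟨⟨h1, by omega⟩, h3⟩
    have h4 : ((Finset.Ioo T t).filter (fun t => a ∈ 𝒯 t)).card < k := by convert h3
    omega
  cases hRc : R with
  | nil =>
    have hET : E = T := by rw [hE, hRc]; rfl
    obtain ⟨x, hx⟩ := Finset.card_pos.mp (show 0 < W.card by omega)
    have := main x hx (W.erase x) (Finset.erase_subset _ _) (by simp) (by simp [hRc])
    rw [Finset.card_erase_of_mem hx] at this
    omega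
  | cons x r =>
    have hxR : x ∈ R := by simp [hRc]
    have := main x (hRW x hxR) (W \ R.toFinset) Finset.sdiff_subset (by simp [hxR])
      (by intro a ha; simpa using (Finset.mem_sdiff.mp ha).2)
    have h2 := Finset.le_card_sdiff R.toFinset W
    rw [List.toFinset_card_of_nodup hnd] at h2
    rw [← hRc]
    omega
end

section
/- Let G be a finite bipartite graph with parts A and B. If G contains no conflicting induced subgraph, then |B| ≥ |A|. -/
/-- Let `G` be a finite bipartite graph with parts `A` and `B`,
given by the two finite types `α`, `β` and the edge relation `E`.  For `A' ⊆ A`,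
`B' ⊆ B`, the induced subgraph on `A' ∪ B'` is *conflicting* if `A'` is nonempty,
every vertex of `A'` has all of its `G`-neighbors inside `B'`, and every vertex of
`B'` has at least two neighbors in `A'`.  If `G` contains no conflicting induced
subgraph, then `|B| ≥ |A|`. -/
theorem no_conflicting_subgraph_card_le {α β : Type*} [Fintype α] [Fintype β]
    (E : α → β → Prop)
    (hnc : ¬ ∃ (A' : Finset α) (B' : Finset β),
        A'.Nonempty ∧
        (∀ a ∈ A', ∀ b : β, E a b → b ∈ B') ∧
        (∀ b ∈ B', ∃ a₁ ∈ A', ∃ a₂ ∈ A', a₁ ≠ a₂ ∧ E a₁ b ∧ E a₂ b)) :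
    Fintype.card α ≤ Fintype.card β := by
  classical
  have key : ∀ (n : ℕ) (S : Finset α), S.card = n →
      S.card ≤ (Finset.univ.filter (fun b : β => ∃ a ∈ S, E a b)).card := by
    intro n
    induction n with
    | zero => intro S hS; omega
    | succ n ih =>
      intro S hS
      have hne : S.Nonempty := Finset.card_pos.mp (by omega)
      -- some neighbor of `S` has exactly one neighbor in `S`
      have hex : ∃ b, ∃ a ∈ S, E a b ∧ ∀ a' ∈ S, E a' b → a' = a := by
        by_contra hcon
        push Not at hcon
        refine hnc ⟨S, Finset.univ.filter (fun b : β => ∃ a ∈ S, E a b), hne, ?_, ?_⟩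
        · intro a ha b hab
          simpa using ⟨a, ha, hab⟩
        · intro b hb
          obtain ⟨a, ha, hab⟩ := (Finset.mem_filter.mp hb).2
          obtain ⟨a', ha', hab', hn⟩ := hcon b a ha hab
          exact ⟨a', ha', a, ha, hn, hab', hab⟩
      obtain ⟨b, a, ha, hab, huniq⟩ := hex
      have hc : (S.erase a).card = n := by rw [Finset.card_erase_of_mem ha]; omega
      have h1 := ih (S.erase a) hc
      have h2 : (Finset.univ.filter (fun b : β => ∃ a' ∈ S.erase a, E a' b)).card
          < (Finset.univ.filter (fun b : β => ∃ a ∈ S, E a b)).card := by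
        apply Finset.card_lt_card
        rw [Finset.ssubset_iff_of_subset]
        · refine ⟨b, by simpa using ⟨a, ha, hab⟩, ?_⟩
          intro hb
          obtain ⟨a', ha', hab'⟩ := (Finset.mem_filter.mp hb).2
          exact (Finset.mem_erase.mp ha').1 (huniq a' (Finset.mem_erase.mp ha').2 hab')
        · intro c hc
          obtain ⟨a', ha', hab'⟩ := (Finset.mem_filter.mp hc).2
          exact Finset.mem_filter.mpr
            ⟨Finset.mem_univ _, a', (Finset.mem_erase.mp ha').2, hab'⟩
      omega
  exact (key _ Finset.univ rfl).trans (Finset.card_le_univ _)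
end

section
/- Let h and k be natural numbers and let S be a finite set of Boolean strings (lists of Booleans) that is prefix-free (no string in S is a proper prefix of another), such that every string in S has length at most h and contains at most k occurrences of true. Then |S| ≤ ∑_{i=0}^{k} C(h, i), where C(h, i) denotes the binomial coefficient. -/
theorem aux_count (x : List Bool) : ∀ h : ℕ,
    ((Finset.range h).filter (fun i => x.getD i false = true)).card ≤ x.count true := by
  induction x with
  | nil => intro h; simp
  | cons a t ih =>
    intro h
    cases h with
    | zero => simp
    | succ h =>
      have := ih h
      rw [Finset.card_filter] at this ⊢
      rw [Finset.sum_range_succ']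
      simp only [List.getD_cons_succ, List.getD_cons_zero, List.count_cons]
      cases a <;> simp at this ⊢ <;> omega

theorem aux_prefix (h : ℕ) (x y : List Bool) (hx : x.length ≤ y.length) (hy : y.length ≤ h)
    (e : ∀ i < h, (x.getD i false = true ↔ y.getD i false = true)) : x <+: y := by
  rw [List.prefix_iff_eq_take]
  apply List.ext_getElem
  · simp [hx]
  · intro i h1 h2
    have := e i (by omega)
    rw [List.getD_eq_getElem _ _ h1, List.getD_eq_getElem _ _ (by omega)] at this
    rw [List.getElem_take]
    exact Bool.eq_iff_iff.mpr this

/-- Let `S` be a finite prefix-free set of Boolean strings, each of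
length at most `h` and containing at most `k` occurrences of `true`.  Then
`|S| ≤ ∑_{i=0}^{k} C(h, i)`. -/
theorem prefixFree_card_le (h k : ℕ) (S : Finset (List Bool))
    (hpf : ∀ x ∈ S, ∀ y ∈ S, x ≠ y → ¬ x <+: y)
    (hlen : ∀ x ∈ S, x.length ≤ h)
    (htrue : ∀ x ∈ S, x.count true ≤ k) :
    S.card ≤ ∑ i ∈ Finset.range (k + 1), h.choose i := by
  have key : S.card ≤ ((Finset.range (k + 1)).biUnion
      (fun i => Finset.powersetCard i (Finset.range h))).card := by
    apply Finset.card_le_card_of_injOn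
      (fun x => (Finset.range h).filter (fun i => x.getD i false = true))
    · intro x hx
      have h1 := aux_count x h
      have h2 := htrue x hx
      rw [Finset.mem_coe, Finset.mem_biUnion]
      exact ⟨_, Finset.mem_range.mpr (Nat.lt_succ_of_le (h1.trans h2)),
        Finset.mem_powersetCard.mpr ⟨Finset.filter_subset _ _, rfl⟩⟩
    · intro x hx y hy e
      have e' : ∀ i < h, (x.getD i false = true ↔ y.getD i false = true) := by
        intro i hi
        have := Finset.ext_iff.mp e i
        simpa only [Finset.mem_filter, Finset.mem_range, hi, true_and] using this
      by_contra hne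
      rcases le_total x.length y.length with hl | hl
      · exact hpf x hx y hy hne (aux_prefix h x y hl (hlen y hy) e')
      · exact hpf y hy x hx (Ne.symm hne)
          (aux_prefix h y x hl (hlen x hx) (fun i hi => (e' i hi).symm))
  refine key.trans (Finset.card_biUnion_le.trans (le_of_eq ?_))
  simp
end
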